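/- Let n ≥ 2, Ω = ℝⁿ \ {0}, and x ∈ Ω. Then the quasihyperbolic ball B_k(x,r) = { y ∈ Ω : k_Ω(x,y) < r } is strictly convex for every r ∈ (0,1], and it is not convex for every r > 1. -/

import Mathlib

open Set Metric MeasureTheory

noncomputable section

variable {E : Type*} [NormedAddCommGroup E] [NormedSpace ℝ E]

/-- The quasihyperbolic length of a path `γ` (parametrized on `[0,1]`) in the
domain `Ω`: the integral of `‖γ'(t)‖ / d(γ(t), ∂Ω)`. -/
def qhLength (Ω : Set E) (γ : ℝ → E) : ℝ :=
  ∫ t in (0:ℝ)..1, ‖deriv γ t‖ / infDist (γ t) (frontier Ω)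

/-- A rectifiable curve in `Ω` joining `x` and `y`, formalized as a map on `[0,1]`
which is Lipschitz on `[0,1]` (every rectifiable curve admits such a
parametrization), takes values in `Ω`, and joins `x` to `y`. -/
def IsRectPath (Ω : Set E) (x y : E) (γ : ℝ → E) : Prop :=
  (∃ K : NNReal, LipschitzOnWith K γ (Icc 0 1)) ∧
    MapsTo γ (Icc 0 1) Ω ∧ γ 0 = x ∧ γ 1 = y

/-- The quasihyperbolic metric on `Ω`. -/
def qhDist (Ω : Set E) (x y : E) : ℝ :=
  sInf (qhLength Ω '' {γ | IsRectPath Ω x y γ})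

/-- The quasihyperbolic ball. -/
def qhBall (Ω : Set E) (x : E) (r : ℝ) : Set E :=
  {y ∈ Ω | qhDist Ω x y < r}

/-- The distance ratio metric (`j`-metric) on `Ω`. -/
def jDist (Ω : Set E) (x y : E) : ℝ :=
  Real.log (1 + dist x y / min (infDist x (frontier Ω)) (infDist y (frontier Ω)))

/-- The `j`-metric ball. -/
def jBall (Ω : Set E) (x : E) (r : ℝ) : Set E :=
  {y ∈ Ω | jDist Ω x y < r}

/-- `G` is strictly starlike with respect to `x`: it is starlike with respect to `x`
and every half-line emanating from `x` meets `∂G` at exactly one point. -/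
def StrictlyStarlike (G : Set E) (x : E) : Prop :=
  StarConvex ℝ x G ∧
    ∀ v : E, v ≠ 0 → ∃! p : E, p ∈ frontier G ∧ ∃ t : ℝ, 0 < t ∧ p = x + t • v

/-- `G` is strictly convex: it is strictly starlike with respect to each of its points. -/
def StrictlyConvexSet (G : Set E) : Prop :=
  ∀ x ∈ G, StrictlyStarlike G x

/-- A half-line: `{t • v + z : t > 0}` or `{t • v + z : t ≥ 0}` with `v ≠ 0`. -/
def IsHalfline (L : Set E) : Prop :=
  ∃ z v : E, v ≠ 0 ∧
    (L = {p | ∃ t : ℝ, 0 < t ∧ p = t • v + z} ∨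
      L = {p | ∃ t : ℝ, 0 ≤ t ∧ p = t • v + z})

/-- `G` is close-to-convex: its complement can be covered with pairwise
non-intersecting half-lines. -/
def CloseToConvex (G : Set E) : Prop :=
  ∃ 𝒮 : Set (Set E), (∀ L ∈ 𝒮, IsHalfline L) ∧ 𝒮.PairwiseDisjoint id ∧ Gᶜ = ⋃₀ 𝒮

end

/-!
In the coordinates `y ↦ (log ‖y‖, y / ‖y‖)` the quasihyperbolic metric of the punctured space is the
product metric of the cylinder over the unit sphere: `k(x, y)² = log² (‖y‖ / ‖x‖) + ∠(x, y)²`.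
Near the diagonal the right-hand side is `‖y - x‖² / ‖x‖²` up to a factor tending to `1`, so the
distance from `x` grows along a path `γ` at rate at most `‖γ'‖ / ‖γ‖`, and logarithmic spirals
attain this bound.

Hence, with `‖x‖` as unit of length and `r ≤ π`, a point `y` lies in the ball of radius `r` exactly
when `t = ‖y‖` satisfies `|log t| < r` and the component of `y` along `x` exceeds
`t cos √(r² - log² t)`. For `r ≤ 1` this function of `t` is increasing and convex, so the ball is
convex because the norm is. For `r > 1` it decreases near `t = exp (-r)`: a chord joining two points
that are mirror images in the axis of `x` and slightly outside the sphere of radius `exp (-r)` has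
its midpoint inside that sphere.
-/

section

open Real

theorem mul_cos_le_sin {x : ℝ} (hx : 0 ≤ x) (hxπ : x ≤ π) : x * cos x ≤ sin x := by
  rcases lt_or_ge x (π / 2) with h | h
  · have hcos : 0 < cos x := cos_pos_of_mem_Ioo ⟨by linarith, h⟩
    rw [← le_div_iff₀ hcos, ← tan_eq_sin_div_cos]
    exact le_tan hx h
  · have hcos : cos x ≤ 0 := cos_nonpos_of_pi_div_two_le_of_le h (by linarith)
    exact (mul_nonpos_of_nonneg_of_nonpos hx hcos).trans (sin_nonneg_of_nonneg_of_le_pi hx hxπ)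

theorem cos_le_exp_neg_sq_div_two {x : ℝ} (hx : 0 ≤ x) (hxπ : x ≤ π) :
    cos x ≤ exp (-(x ^ 2 / 2)) := by
  have hderiv (t : ℝ) : HasDerivAt (fun t ↦ cos t * exp (t ^ 2 / 2))
      ((t * cos t - sin t) * exp (t ^ 2 / 2)) t := by
    have hsq : HasDerivAt (fun t : ℝ ↦ t ^ 2 / 2) t t :=
      ((hasDerivAt_pow 2 t).div_const 2).congr_deriv (by norm_num)
    exact ((hasDerivAt_cos t).mul hsq.exp).congr_deriv (by ring)
  have hanti : AntitoneOn (fun t ↦ cos t * exp (t ^ 2 / 2)) (Icc 0 π) := by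
    refine antitoneOn_of_hasDerivWithinAt_nonpos (convex_Icc 0 π)
      (fun t _ ↦ (hderiv t).continuousAt.continuousWithinAt)
      (fun t _ ↦ (hderiv t).hasDerivWithinAt) fun t ht ↦ ?_
    have ht' := interior_subset ht
    exact mul_nonpos_of_nonpos_of_nonneg (sub_nonpos.2 (mul_cos_le_sin ht'.1 ht'.2)) (exp_pos _).le
  have hle : cos x * exp (x ^ 2 / 2) ≤ 1 := by
    simpa using hanti ⟨le_rfl, pi_pos.le⟩ ⟨hx, hxπ⟩ hx
  rwa [exp_neg, ← one_div, le_div_iff₀ (exp_pos _)]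

end

section StrictConvexity

open scoped Pointwise

variable {V : Type*} [NormedAddCommGroup V] [NormedSpace ℝ V] {G : Set V}

theorem existsUnique_mem_frontier_ray (hconv : Convex ℝ G) (hopen : IsOpen G)
    (hbdd : Bornology.IsBounded G) {x : V} (hx : x ∈ G) {v : V} (hv : v ≠ 0) :
    ∃! p : V, p ∈ frontier G ∧ ∃ t : ℝ, 0 < t ∧ p = x + t • v := by
  let s : Set V := Homeomorph.addLeft x ⁻¹' G
  have hs_conv : Convex ℝ s := hconv.translate_preimage_right x
  have hs_nhds : s ∈ nhds 0 :=
    (hopen.preimage (Homeomorph.addLeft x).continuous).mem_nhds (by simpa [s] using hx)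
  have hs_bdd : Bornology.IsBounded s := by
    have : s = -x +ᵥ G := by ext y; simp [s, mem_vadd_set_iff_neg_vadd_mem]
    exact this ▸ hbdd.vadd (-x)
  have mem_frontier_iff (y : V) : x + y ∈ frontier G ↔ gauge s y = 1 := by
    rw [gauge_eq_one_iff_mem_frontier hs_conv hs_nhds, ← Homeomorph.preimage_frontier]
    rfl
  have hgauge : 0 < gauge s v := (gauge_pos (absorbent_nhds_zero hs_nhds)
    ((NormedSpace.isVonNBounded_iff ℝ).2 hs_bdd)).2 hv
  have on_ray_iff {t : ℝ} (ht : 0 < t) : x + t • v ∈ frontier G ↔ t = (gauge s v)⁻¹ := by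
    rw [mem_frontier_iff, gauge_smul_of_nonneg ht.le, smul_eq_mul,
      mul_eq_one_iff_eq_inv₀ hgauge.ne']
  refine ⟨x + (gauge s v)⁻¹ • v,
    ⟨(on_ray_iff (inv_pos.2 hgauge)).2 rfl, _, inv_pos.2 hgauge, rfl⟩, ?_⟩
  rintro _ ⟨hp, t, ht, rfl⟩
  rw [(on_ray_iff ht).1 hp]

theorem strictlyConvexSet_of_convex_of_isOpen_of_isBounded (hconv : Convex ℝ G) (hopen : IsOpen G)
    (hbdd : Bornology.IsBounded G) : StrictlyConvexSet G := fun _ hx ↦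
  ⟨hconv.starConvex hx, fun _ hv ↦ existsUnique_mem_frontier_ray hconv hopen hbdd hx hv⟩

end StrictConvexity

section LogPolarDist

open Real InnerProductGeometry Filter Topology
open scoped RealInnerProductSpace

variable {V : Type*} [NormedAddCommGroup V] [InnerProductSpace ℝ V] {x y z : V}

/-- The distance between nonzero vectors in the coordinates `y ↦ (log ‖y‖, y / ‖y‖)`, which
identify the punctured space with the cylinder over the unit sphere; the sphere carries the
angular metric. Values at the zero vector have no meaning. -/
noncomputable def logPolarDist (x y : V) : ℝ :=
  √(log (‖y‖ / ‖x‖) ^ 2 + angle x y ^ 2)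

theorem sq_logPolarDist (x y : V) :
    logPolarDist x y ^ 2 = log (‖y‖ / ‖x‖) ^ 2 + angle x y ^ 2 :=
  sq_sqrt (by positivity)

theorem logPolarDist_self (hx : x ≠ 0) : logPolarDist x x = 0 := by
  simp [logPolarDist, hx]

theorem logPolarDist_comm (x y : V) : logPolarDist x y = logPolarDist y x := by
  rw [logPolarDist, ← inv_div, log_inv, neg_sq, angle_comm, logPolarDist]

theorem abs_log_le_logPolarDist (x y : V) : |log (‖y‖ / ‖x‖)| ≤ logPolarDist x y :=
  abs_le_sqrt (le_add_of_nonneg_right (sq_nonneg _))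

theorem logPolarDist_triangle (hx : x ≠ 0) (hy : y ≠ 0) (hz : z ≠ 0) :
    logPolarDist x z ≤ logPolarDist x y + logPolarDist y z := by
  have hlog : log (‖z‖ / ‖x‖) = log (‖y‖ / ‖x‖) + log (‖z‖ / ‖y‖) := by
    rw [← log_mul (by simp [hx, hy]) (by simp [hy, hz])]
    congr 1
    field_simp
  have hangle := angle_le_angle_add_angle x y z
  calc logPolarDist x z
      ≤ √((log (‖y‖ / ‖x‖) + log (‖z‖ / ‖y‖)) ^ 2 + (angle x y + angle y z) ^ 2) := by
        rw [logPolarDist, hlog]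
        have := angle_nonneg x z
        gcongr
    _ = ‖(⟨log (‖y‖ / ‖x‖), angle x y⟩ + ⟨log (‖z‖ / ‖y‖), angle y z⟩ : ℂ)‖ := by
        rw [Complex.norm_eq_sqrt_sq_add_sq, Complex.add_re, Complex.add_im]
    _ ≤ logPolarDist x y + logPolarDist y z := by
        refine (norm_add_le _ _).trans_eq ?_
        simp only [Complex.norm_eq_sqrt_sq_add_sq, logPolarDist]

theorem abs_logPolarDist_sub_le (hx : x ≠ 0) (hy : y ≠ 0) (hz : z ≠ 0) :
    |logPolarDist x z - logPolarDist x y| ≤ logPolarDist y z := by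
  have hxz := logPolarDist_triangle hx hy hz
  have hxy := logPolarDist_triangle hx hz hy
  rw [logPolarDist_comm z y] at hxy
  exact abs_le.2 ⟨by linarith, by linarith⟩

theorem continuousAt_logPolarDist (hx : x ≠ 0) (hy : y ≠ 0) :
    ContinuousAt (logPolarDist x) y := by
  have hangle : ContinuousAt (angle x) y :=
    (continuousAt_angle (x := (x, y)) hx hy).comp (f := fun z ↦ (x, z)) (by fun_prop)
  have hlog : ContinuousAt (fun z ↦ log (‖z‖ / ‖x‖)) y :=
    (continuousAt_id.norm.div_const _).log (by simp [hx, hy])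
  exact ((hlog.pow 2).add (hangle.pow 2)).sqrt

theorem norm_sub_sq_eq_sinh_sq_add_sin_sq (hy : y ≠ 0) (hz : z ≠ 0) :
    ‖z - y‖ ^ 2 = ‖y‖ * ‖z‖ *
      ((2 * sinh (log (‖z‖ / ‖y‖) / 2)) ^ 2 + (2 * sin (angle y z / 2)) ^ 2) := by
  have hsinh : (2 * sinh (log (‖z‖ / ‖y‖) / 2)) ^ 2 = ‖z‖ / ‖y‖ + ‖y‖ / ‖z‖ - 2 := by
    have hcosh := cosh_two_mul (log (‖z‖ / ‖y‖) / 2)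
    rw [mul_div_cancel₀ _ two_ne_zero, cosh_log (by positivity), cosh_sq, inv_div] at hcosh
    linear_combination -2 * hcosh
  have hsin : (2 * sin (angle y z / 2)) ^ 2 = 2 - 2 * cos (angle y z) := by
    rw [mul_pow, sin_sq_eq_half_sub, mul_div_cancel₀ _ two_ne_zero]
    ring
  rw [hsinh, hsin, norm_sub_sq_real, real_inner_comm, ← cos_angle_mul_norm_mul_norm]
  field_simp
  ring

theorem mul_logPolarDist_le_of_mul_angle_le (hy : y ≠ 0) (hz : z ≠ 0) {c : ℝ} (hc₀ : 0 ≤ c)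
    (hc₁ : c ≤ 1) (hangle : c * angle y z ≤ 2 * sin (angle y z / 2)) :
    c * logPolarDist y z ≤ ‖z - y‖ / √(‖y‖ * ‖z‖) := by
  have hlog : log (‖z‖ / ‖y‖) ^ 2 ≤ (2 * sinh (log (‖z‖ / ‖y‖) / 2)) ^ 2 := by
    rw [sq_le_sq, abs_mul, abs_sinh, abs_two]
    have := self_le_sinh_iff.2 (abs_nonneg (log (‖z‖ / ‖y‖) / 2))
    rw [abs_div, abs_two] at this ⊢
    linarith
  refine le_of_sq_le_sq ?_ (by positivity)
  rw [mul_pow, sq_logPolarDist, div_pow, sq_sqrt (by positivity),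
    norm_sub_sq_eq_sinh_sq_add_sin_sq hy hz, mul_div_cancel_left₀ _ (by positivity), mul_add,
    ← mul_pow c (angle y z)]
  have := angle_nonneg y z
  gcongr
  exact (mul_le_of_le_one_left (sq_nonneg _) (pow_le_one₀ hc₀ hc₁)).trans hlog

theorem logPolarDist_le_mul_norm_sub (hy : y ≠ 0) (hz : z ≠ 0) :
    logPolarDist y z ≤ π / 2 * (‖z - y‖ / √(‖y‖ * ‖z‖)) := by
  have hangle : 2 / π * angle y z ≤ 2 * sin (angle y z / 2) := by
    have := mul_le_sin (x := angle y z / 2) (by linarith [angle_nonneg y z])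
      (by linarith [angle_le_pi y z])
    linarith
  have := mul_logPolarDist_le_of_mul_angle_le hy hz (by positivity)
    ((div_le_one pi_pos).2 two_le_pi) hangle
  rwa [← inv_div, inv_mul_le_iff₀ (by positivity)] at this

theorem cos_mul_logPolarDist_le (hy : y ≠ 0) (hz : z ≠ 0) :
    cos (angle y z / 2) * logPolarDist y z ≤ ‖z - y‖ / √(‖y‖ * ‖z‖) := by
  have h₀ := angle_nonneg y z
  have hπ := angle_le_pi y z
  refine mul_logPolarDist_le_of_mul_angle_le hy hz
    (cos_nonneg_of_mem_Icc ⟨by linarith, by linarith⟩) (cos_le_one _) ?_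
  linarith [mul_cos_le_sin (x := angle y z / 2) (by linarith) (by linarith)]

theorem lipschitzOnWith_logPolarDist {m : ℝ} (hm : 0 < m) (hx : x ≠ 0) :
    LipschitzOnWith (π / 2 / m).toNNReal (logPolarDist x) {y | m ≤ ‖y‖} := by
  refine LipschitzOnWith.of_dist_le_mul fun z hz y hy ↦ ?_
  have hy₀ : y ≠ 0 := norm_pos_iff.1 (hm.trans_le hy)
  have hz₀ : z ≠ 0 := norm_pos_iff.1 (hm.trans_le hz)
  have hsqrt : m ≤ √(‖y‖ * ‖z‖) := le_sqrt_of_sq_le (by rw [sq]; gcongr <;> assumption)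
  rw [dist_eq, dist_eq_norm, coe_toNNReal _ (by positivity)]
  calc |logPolarDist x z - logPolarDist x y|
      ≤ logPolarDist y z := abs_logPolarDist_sub_le hx hy₀ hz₀
    _ ≤ π / 2 * (‖z - y‖ / √(‖y‖ * ‖z‖)) := logPolarDist_le_mul_norm_sub hy₀ hz₀
    _ ≤ π / 2 * (‖z - y‖ / m) := by gcongr
    _ = π / 2 / m * ‖z - y‖ := by ring

theorem deriv_logPolarDist_comp_le (hx : x ≠ 0) {γ : ℝ → V} {t : ℝ} (hγ : DifferentiableAt ℝ γ t)
    (hγt : γ t ≠ 0) : deriv (fun s ↦ logPolarDist x (γ s)) t ≤ ‖deriv γ t‖ / ‖γ t‖ := by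
  by_cases hρ : DifferentiableAt ℝ (fun s ↦ logPolarDist x (γ s)) t
  swap
  · rw [deriv_zero_of_not_differentiableAt hρ]
    positivity
  have hγ_tendsto : Tendsto γ (𝓝[≠] t) (𝓝 (γ t)) := hγ.continuousAt.tendsto.mono_left inf_le_left
  have hcos : Tendsto (fun s ↦ cos (angle (γ t) (γ s) / 2)) (𝓝[≠] t) (𝓝 1) := by
    have hangle : ContinuousAt (angle (γ t)) (γ t) :=
      (continuousAt_angle (x := (γ t, γ t)) hγt hγt).comp (f := fun z ↦ (γ t, z)) (by fun_prop)
    simpa [angle_self hγt, Function.comp_def] using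
      (continuous_cos.tendsto _).comp ((hangle.tendsto.comp hγ_tendsto).div_const 2)
  have hsqrt : Tendsto (fun s ↦ √(‖γ t‖ * ‖γ s‖)) (𝓝[≠] t) (𝓝 ‖γ t‖) := by
    simpa using (hγ_tendsto.norm.const_mul ‖γ t‖).sqrt
  have hleft := hcos.mul (hasDerivAt_iff_tendsto_slope.1 hρ.hasDerivAt).abs
  have hright : Tendsto (fun s ↦ ‖slope γ t s‖ / √(‖γ t‖ * ‖γ s‖)) (𝓝[≠] t)
      (𝓝 (‖deriv γ t‖ / ‖γ t‖)) :=
    (hasDerivAt_iff_tendsto_slope.1 hγ.hasDerivAt).norm.div hsqrt (norm_ne_zero_iff.2 hγt)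
  rw [one_mul] at hleft
  refine (le_abs_self _).trans (le_of_tendsto_of_tendsto hleft hright ?_)
  filter_upwards [hγ_tendsto.eventually_ne hγt, hcos.eventually (lt_mem_nhds one_pos)]
    with s hγs hcos_pos
  rw [slope_def_module, slope_def_module, norm_smul, smul_eq_mul, abs_mul, norm_eq_abs]
  calc cos (angle (γ t) (γ s) / 2) *
        (|(s - t)⁻¹| * |logPolarDist x (γ s) - logPolarDist x (γ t)|)
      ≤ cos (angle (γ t) (γ s) / 2) * (|(s - t)⁻¹| * logPolarDist (γ t) (γ s)) := by
        gcongr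
        exact abs_logPolarDist_sub_le hx hγt hγs
    _ = |(s - t)⁻¹| * (cos (angle (γ t) (γ s) / 2) * logPolarDist (γ t) (γ s)) := by ring
    _ ≤ |(s - t)⁻¹| * (‖γ s - γ t‖ / √(‖γ t‖ * ‖γ s‖)) := by
        gcongr
        exact cos_mul_logPolarDist_le hγt hγs
    _ = |(s - t)⁻¹| * ‖γ s - γ t‖ / √(‖γ t‖ * ‖γ s‖) := by rw [mul_div_assoc]

end LogPolarDist

section IntervalIntegral

variable {a b : ℝ}

theorem intervalIntegrable_deriv_of_lipschitzOnWith {F : Type*} [NormedAddCommGroup F]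
    [NormedSpace ℝ F] [CompleteSpace F] {f : ℝ → F} {K : NNReal} (hab : a ≤ b)
    (hf : LipschitzOnWith K f (Icc a b)) : IntervalIntegrable (deriv f) volume a b := by
  rw [intervalIntegrable_iff_integrableOn_Ioo_of_le hab]
  refine Measure.integrableOn_of_bounded (M := K) (by simp)
    (stronglyMeasurable_deriv f).aestronglyMeasurable ?_
  filter_upwards [ae_restrict_mem measurableSet_Ioo] with t ht
  exact norm_deriv_le_of_lipschitzOn (Icc_mem_nhds ht.1 ht.2) hf

theorem sub_le_integral_of_ae_deriv_le {g φ : ℝ → ℝ} (hab : a ≤ b)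
    (hg : AbsolutelyContinuousOnInterval g a b) (hφ : IntervalIntegrable φ volume a b)
    (h : ∀ᵐ t, t ∈ Ioo a b → deriv g t ≤ φ t) : g b - g a ≤ ∫ t in a..b, φ t := by
  rw [← hg.integral_deriv_eq_sub]
  refine intervalIntegral.integral_mono_ae_restrict hab hg.intervalIntegrable_deriv hφ ?_
  rw [← restrict_Ioo_eq_restrict_Icc]
  exact (ae_restrict_iff' measurableSet_Ioo).2 h

end IntervalIntegral

section QuasihyperbolicLength

variable {V : Type*} [NormedAddCommGroup V]

section NormedSpace

variable [NormedSpace ℝ V] {Ω : Set V} {x y : V} {γ : ℝ → V}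

theorem qhLength_nonneg (Ω : Set V) (γ : ℝ → V) : 0 ≤ qhLength Ω γ :=
  intervalIntegral.integral_nonneg zero_le_one fun _ _ ↦ div_nonneg (norm_nonneg _) infDist_nonneg

theorem IsRectPath.qhDist_le_qhLength (h : IsRectPath Ω x y γ) : qhDist Ω x y ≤ qhLength Ω γ :=
  csInf_le ⟨0, by rintro _ ⟨γ, -, rfl⟩; exact qhLength_nonneg Ω γ⟩ (mem_image_of_mem _ h)

theorem IsRectPath.mem_qhBall_of_qhLength_lt {r : ℝ} (h : IsRectPath Ω x y γ)
    (hr : qhLength Ω γ < r) : y ∈ qhBall Ω x r :=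
  ⟨h.2.2.2 ▸ h.2.1 ⟨zero_le_one, le_rfl⟩, h.qhDist_le_qhLength.trans_lt hr⟩

theorem qhLength_compl_zero [Nontrivial V] (γ : ℝ → V) :
    qhLength {0}ᶜ γ = ∫ t in (0 : ℝ)..1, ‖deriv γ t‖ / ‖γ t‖ := by
  have : frontier ({0}ᶜ : Set V) = {0} := by
    rw [frontier_compl, frontier, closure_singleton, interior_singleton, sdiff_empty]
  simp only [qhLength, this, infDist_singleton, dist_zero_right]

end NormedSpace

theorem logPolarDist_le_qhLength [InnerProductSpace ℝ V] [FiniteDimensional ℝ V] {x y : V}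
    {γ : ℝ → V} (h : IsRectPath {0}ᶜ x y γ) :
    logPolarDist x y ≤ qhLength {0}ᶜ γ := by
  obtain ⟨⟨K, hK⟩, hmaps, rfl, rfl⟩ := h
  have hγ₀ : γ 0 ≠ 0 := hmaps ⟨le_rfl, zero_le_one⟩
  have : Nontrivial V := ⟨γ 0, 0, hγ₀⟩
  obtain ⟨t₀, ht₀, hmin⟩ :=
    isCompact_Icc.exists_isMinOn (nonempty_Icc.2 zero_le_one) hK.continuousOn.norm
  have hlip : LipschitzOnWith _ (fun t ↦ logPolarDist (γ 0) (γ t)) (Icc 0 1) :=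
    (lipschitzOnWith_logPolarDist (norm_pos_iff.2 (hmaps ht₀)) hγ₀).comp hK fun t ht ↦ hmin ht
  have hint : IntervalIntegrable (fun t ↦ ‖deriv γ t‖ / ‖γ t‖) volume 0 1 := by
    refine (intervalIntegrable_deriv_of_lipschitzOnWith zero_le_one hK).norm.mul_continuousOn ?_
    rw [uIcc_of_le zero_le_one]
    exact hK.continuousOn.norm.inv₀ fun t ht ↦ norm_ne_zero_iff.2 (hmaps ht)
  have hderiv : ∀ᵐ t, t ∈ Ioo (0 : ℝ) 1 →
      deriv (fun s ↦ logPolarDist (γ 0) (γ s)) t ≤ ‖deriv γ t‖ / ‖γ t‖ := by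
    filter_upwards [hK.ae_differentiableWithinAt_of_mem_real] with t hdiff ht
    exact deriv_logPolarDist_comp_le hγ₀
      ((hdiff (Ioo_subset_Icc_self ht)).differentiableAt (Icc_mem_nhds ht.1 ht.2))
      (hmaps (Ioo_subset_Icc_self ht))
  have hac : AbsolutelyContinuousOnInterval (fun t ↦ logPolarDist (γ 0) (γ t)) 0 1 :=
    LipschitzOnWith.absolutelyContinuousOnInterval (by rwa [uIcc_of_le zero_le_one])
  calc logPolarDist (γ 0) (γ 1) = logPolarDist (γ 0) (γ 1) - logPolarDist (γ 0) (γ 0) := by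
        rw [logPolarDist_self hγ₀, sub_zero]
    _ ≤ ∫ t in (0 : ℝ)..1, ‖deriv γ t‖ / ‖γ t‖ :=
        sub_le_integral_of_ae_deriv_le zero_le_one hac hint hderiv
    _ = qhLength {0}ᶜ γ := (qhLength_compl_zero γ).symm

end QuasihyperbolicLength

section LogSpiral

open Real
open scoped RealInnerProductSpace

variable {V : Type*} [NormedAddCommGroup V] [InnerProductSpace ℝ V] {x f : V}

/-- The logarithmic spiral in the plane of `x` and `f`, run from `x` to
`exp l • (cos α • x + sin α • f)` as `t` goes from `0` to `1`. For `f` orthogonal to `x` with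
`‖f‖ = ‖x‖` it is a geodesic of the punctured space. -/
noncomputable def logSpiral (x f : V) (l α t : ℝ) : V :=
  exp (t * l) • (cos (t * α) • x + sin (t * α) • f)

theorem contDiff_logSpiral (x f : V) (l α : ℝ) : ContDiff ℝ 1 (logSpiral x f l α) := by
  unfold logSpiral
  fun_prop

theorem hasDerivAt_logSpiral (x f : V) (l α t : ℝ) : HasDerivAt (logSpiral x f l α)
    (exp (t * l) • ((l * cos (t * α) - α * sin (t * α)) • x +
      (l * sin (t * α) + α * cos (t * α)) • f)) t := by
  have hl : HasDerivAt (fun t ↦ t * l) l t := hasDerivAt_mul_const l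
  have hα : HasDerivAt (fun t ↦ t * α) α t := hasDerivAt_mul_const α
  refine (hl.exp.smul ((hα.cos.smul_const x).fun_add (hα.sin.smul_const f))).congr_deriv ?_
  module

theorem norm_smul_add_smul_of_inner_eq_zero (hxf : ⟪x, f⟫ = 0) (hnorm : ‖f‖ = ‖x‖) (p q : ℝ) :
    ‖p • x + q • f‖ = √(p ^ 2 + q ^ 2) * ‖x‖ := by
  have hinner : ⟪p • x, q • f⟫ = 0 := by simp [inner_smul_left, inner_smul_right, hxf]
  have hsq := norm_add_sq_eq_norm_sq_add_norm_sq_real hinner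
  rw [← sq_eq_sq₀ (norm_nonneg _) (by positivity), mul_pow, sq_sqrt (by positivity)]
  rw [norm_smul, norm_smul, hnorm, norm_eq_abs, norm_eq_abs] at hsq
  linear_combination hsq + ‖x‖ ^ 2 * (sq_abs p + sq_abs q)

theorem norm_logSpiral (hxf : ⟪x, f⟫ = 0) (hnorm : ‖f‖ = ‖x‖) (l α t : ℝ) :
    ‖logSpiral x f l α t‖ = exp (t * l) * ‖x‖ := by
  rw [logSpiral, norm_smul, norm_smul_add_smul_of_inner_eq_zero hxf hnorm, cos_sq_add_sin_sq,
    sqrt_one, one_mul, norm_eq_abs, abs_exp]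

theorem norm_deriv_logSpiral (hxf : ⟪x, f⟫ = 0) (hnorm : ‖f‖ = ‖x‖) (l α t : ℝ) :
    ‖deriv (logSpiral x f l α) t‖ = √(l ^ 2 + α ^ 2) * ‖logSpiral x f l α t‖ := by
  have hsq : (l * cos (t * α) - α * sin (t * α)) ^ 2 + (l * sin (t * α) + α * cos (t * α)) ^ 2 =
      l ^ 2 + α ^ 2 := by
    linear_combination (l ^ 2 + α ^ 2) * sin_sq_add_cos_sq (t * α)
  rw [(hasDerivAt_logSpiral x f l α t).deriv, norm_smul,
    norm_smul_add_smul_of_inner_eq_zero hxf hnorm, hsq, norm_logSpiral hxf hnorm, norm_eq_abs,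
    abs_exp]
  ring

theorem isRectPath_logSpiral (hx : x ≠ 0) (hxf : ⟪x, f⟫ = 0) (hnorm : ‖f‖ = ‖x‖) (l α : ℝ) :
    IsRectPath {0}ᶜ x (exp l • (cos α • x + sin α • f)) (logSpiral x f l α) := by
  refine ⟨?_, fun t _ ↦ ?_, by simp [logSpiral], by simp [logSpiral]⟩
  · exact (contDiff_logSpiral x f l α).contDiffOn.exists_lipschitzOnWith one_ne_zero
      (convex_Icc 0 1) isCompact_Icc
  · rw [mem_compl_singleton_iff, ← norm_pos_iff, norm_logSpiral hxf hnorm]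
    positivity

theorem qhLength_logSpiral (hx : x ≠ 0) (hxf : ⟪x, f⟫ = 0) (hnorm : ‖f‖ = ‖x‖) (l α : ℝ) :
    qhLength {0}ᶜ (logSpiral x f l α) = √(l ^ 2 + α ^ 2) := by
  have : Nontrivial V := ⟨x, 0, hx⟩
  have hne (t : ℝ) : ‖logSpiral x f l α t‖ ≠ 0 := by
    rw [norm_logSpiral hxf hnorm]
    positivity
  simp [qhLength_compl_zero, norm_deriv_logSpiral hxf hnorm, hne]

end LogSpiral

section QuasihyperbolicDistance

open Real InnerProductGeometry
open scoped RealInnerProductSpace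

variable {V : Type*} [NormedAddCommGroup V] [InnerProductSpace ℝ V] {x y : V}

theorem exists_inner_eq_zero_norm_eq (hV : 1 < Module.rank ℝ V) (x : V) :
    ∃ f : V, ⟪x, f⟫ = 0 ∧ ‖f‖ = ‖x‖ := by
  have hspan : (ℝ ∙ x)ᗮ ≠ ⊥ := by
    rw [Ne, Submodule.orthogonal_eq_bot_iff]
    intro htop
    have := rank_span_le (R := ℝ) {x}
    rw [htop, rank_top, Cardinal.mk_singleton] at this
    exact this.not_gt hV
  obtain ⟨g, hg, hg₀⟩ := Submodule.exists_mem_ne_zero_of_ne_bot hspan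
  rw [Submodule.mem_orthogonal_singleton_iff_inner_right] at hg
  refine ⟨(‖x‖ / ‖g‖) • g, by rw [inner_smul_right, hg, mul_zero], ?_⟩
  rw [norm_smul, norm_div, norm_norm, norm_norm, div_mul_cancel₀ _ (norm_ne_zero_iff.2 hg₀)]

theorem exists_eq_exp_smul_cos_smul_add_sin_smul (hV : 1 < Module.rank ℝ V) (hx : x ≠ 0)
    (hy : y ≠ 0) : ∃ f : V, ⟪x, f⟫ = 0 ∧ ‖f‖ = ‖x‖ ∧
      y = exp (log (‖y‖ / ‖x‖)) • (cos (angle x y) • x + sin (angle x y) • f) := by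
  set u : V := (‖x‖ / ‖y‖) • y - cos (angle x y) • x with hu
  have hy_eq : y = exp (log (‖y‖ / ‖x‖)) • (cos (angle x y) • x + u) := by
    rw [exp_log (by positivity), hu, add_sub_cancel, smul_smul, div_mul_div_cancel₀ (by simpa),
      div_self (by simpa), one_smul]
  have hxu : ⟪x, u⟫ = 0 := by
    rw [hu, inner_sub_right, inner_smul_right, inner_smul_right, real_inner_self_eq_norm_sq,
      ← cos_angle_mul_norm_mul_norm]
    field_simp
    ring
  have hnorm_u : ‖u‖ = sin (angle x y) * ‖x‖ := by
    have hinner : ⟪cos (angle x y) • x, u⟫ = 0 := by rw [inner_smul_left, hxu, mul_zero]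
    have hsq := norm_add_sq_eq_norm_sq_add_norm_sq_real hinner
    rw [hu, add_sub_cancel, ← hu, norm_smul, norm_div, norm_norm, norm_norm,
      div_mul_cancel₀ _ (by simpa), norm_smul, norm_eq_abs] at hsq
    rw [← sq_eq_sq₀ (norm_nonneg _) (mul_nonneg (sin_angle_nonneg x y) (norm_nonneg _))]
    linear_combination -hsq - ‖x‖ ^ 2 * (sq_abs (cos (angle x y)) + sin_sq_add_cos_sq (angle x y))
  rcases eq_or_ne (sin (angle x y)) 0 with hsin | hsin
  · obtain ⟨f, hxf, hnorm⟩ := exists_inner_eq_zero_norm_eq hV x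
    have hu₀ : u = 0 := by rw [← norm_eq_zero, hnorm_u, hsin, zero_mul]
    exact ⟨f, hxf, hnorm, by rwa [hsin, zero_smul, ← hu₀]⟩
  · refine ⟨(sin (angle x y))⁻¹ • u, by rw [inner_smul_right, hxu, mul_zero], ?_, ?_⟩
    · rw [norm_smul, norm_inv, norm_eq_abs, abs_of_nonneg (sin_angle_nonneg x y), hnorm_u,
        inv_mul_cancel_left₀ hsin]
    · rwa [smul_inv_smul₀ hsin]

theorem qhDist_compl_zero_eq_logPolarDist [FiniteDimensional ℝ V] (hV : 1 < Module.rank ℝ V)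
    (hx : x ≠ 0) (hy : y ≠ 0) : qhDist {0}ᶜ x y = logPolarDist x y := by
  obtain ⟨f, hxf, hnorm, hy_eq⟩ := exists_eq_exp_smul_cos_smul_add_sin_smul hV hx hy
  have hpath := isRectPath_logSpiral hx hxf hnorm (log (‖y‖ / ‖x‖)) (angle x y)
  rw [← hy_eq] at hpath
  apply le_antisymm
  · exact hpath.qhDist_le_qhLength.trans_eq (qhLength_logSpiral hx hxf hnorm _ _)
  · refine le_csInf ⟨_, mem_image_of_mem _ hpath⟩ ?_
    rintro _ ⟨γ, hγ, rfl⟩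
    exact logPolarDist_le_qhLength hγ

theorem mem_qhBall_compl_zero_iff [FiniteDimensional ℝ V] (hV : 1 < Module.rank ℝ V) (hx : x ≠ 0)
    {r : ℝ} : y ∈ qhBall {0}ᶜ x r ↔ y ≠ 0 ∧ logPolarDist x y < r :=
  and_congr_right fun hy ↦ by rw [qhDist_compl_zero_eq_logPolarDist hV hx hy]

theorem isOpen_qhBall_compl_zero [FiniteDimensional ℝ V] (hV : 1 < Module.rank ℝ V) (hx : x ≠ 0)
    (r : ℝ) : IsOpen (qhBall {0}ᶜ x r) := by
  refine isOpen_iff_mem_nhds.2 fun y hy ↦ ?_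
  rw [mem_qhBall_compl_zero_iff hV hx] at hy
  filter_upwards [isOpen_ne.mem_nhds hy.1,
    (continuousAt_logPolarDist hx hy.1).eventually (gt_mem_nhds hy.2)] with z hz₀ hz
  exact (mem_qhBall_compl_zero_iff hV hx).2 ⟨hz₀, hz⟩

theorem norm_div_norm_mem_Ioo_of_mem_qhBall [FiniteDimensional ℝ V] (hV : 1 < Module.rank ℝ V)
    (hx : x ≠ 0) {r : ℝ} (hy : y ∈ qhBall {0}ᶜ x r) : ‖y‖ / ‖x‖ ∈ Ioo (exp (-r)) (exp r) := by
  obtain ⟨hy₀, hy⟩ := (mem_qhBall_compl_zero_iff hV hx).1 hy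
  have hpos : 0 < ‖y‖ / ‖x‖ := by positivity
  have hlog := abs_lt.1 ((abs_log_le_logPolarDist x y).trans_lt hy)
  exact ⟨(lt_log_iff_exp_lt hpos).1 hlog.1, (log_lt_iff_lt_exp hpos).1 hlog.2⟩

theorem isBounded_qhBall_compl_zero [FiniteDimensional ℝ V] (hV : 1 < Module.rank ℝ V) (hx : x ≠ 0)
    (r : ℝ) : Bornology.IsBounded (qhBall {0}ᶜ x r) := by
  refine isBounded_iff_forall_norm_le.2 ⟨exp r * ‖x‖, fun y hy ↦ ?_⟩
  rw [← div_le_iff₀ (by positivity)]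
  exact (norm_div_norm_mem_Ioo_of_mem_qhBall hV hx hy).2.le

end QuasihyperbolicDistance

section Profile

open Real

variable {r s t : ℝ}

/-- The ball of radius `r ≤ π` about `x` consists of the points `y ≠ 0` whose coordinate along `x`
exceeds this function of `t = ‖y‖ / ‖x‖` (with `‖x‖` as unit of length). Where `|log t| ≥ r` the
junk value of `√` makes it equal to `t`, and no such `y` qualifies. -/
noncomputable def qhBallProfile (r t : ℝ) : ℝ := t * cos √(r ^ 2 - log t ^ 2)

theorem qhBallProfile_exp_neg_self (r : ℝ) : qhBallProfile r (exp (-r)) = exp (-r) := by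
  simp [qhBallProfile]

theorem continuousOn_qhBallProfile (r : ℝ) : ContinuousOn (qhBallProfile r) (Ioi 0) := by
  unfold qhBallProfile
  have : ContinuousOn log (Ioi 0) := continuousOn_log.mono fun t ht ↦ (mem_Ioi.1 ht).ne'
  fun_prop

theorem sq_sub_sq_log_pos (ht : t ∈ Ioo (exp (-r)) (exp r)) : 0 < r ^ 2 - log t ^ 2 := by
  have ht₀ : 0 < t := (exp_pos _).trans ht.1
  have h₁ := (lt_log_iff_exp_lt ht₀).2 ht.1
  have h₂ := (log_lt_iff_lt_exp ht₀).2 ht.2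
  nlinarith

theorem hasDerivAt_sqrt_sq_sub_sq_log (ht : t ∈ Ioo (exp (-r)) (exp r)) :
    HasDerivAt (fun t ↦ √(r ^ 2 - log t ^ 2)) (-(log t / (√(r ^ 2 - log t ^ 2) * t))) t := by
  have hq := sq_sub_sq_log_pos ht
  have ht₀ := (exp_pos _).trans ht.1
  have hsq : HasDerivAt (fun t ↦ log t ^ 2) (2 * log t * t⁻¹) t := by
    simpa using (hasDerivAt_log ht₀.ne').fun_pow 2
  refine ((hsq.const_sub (r ^ 2)).sqrt hq.ne').congr_deriv ?_
  have := sqrt_pos.2 hq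
  field_simp

theorem hasDerivAt_qhBallProfile (ht : t ∈ Ioo (exp (-r)) (exp r)) :
    HasDerivAt (qhBallProfile r)
      (cos √(r ^ 2 - log t ^ 2) + log t * (sin √(r ^ 2 - log t ^ 2) / √(r ^ 2 - log t ^ 2))) t := by
  refine ((hasDerivAt_id t).mul (hasDerivAt_sqrt_sq_sub_sq_log ht).cos).congr_deriv ?_
  have := (exp_pos _).trans ht.1
  have := sqrt_pos.2 (sq_sub_sq_log_pos ht)
  simp only [id]
  field_simp

theorem hasDerivAt_deriv_qhBallProfile (ht : t ∈ Ioo (exp (-r)) (exp r)) :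
    HasDerivAt (fun t ↦
        cos √(r ^ 2 - log t ^ 2) + log t * (sin √(r ^ 2 - log t ^ 2) / √(r ^ 2 - log t ^ 2)))
      (((1 + log t) * (sin √(r ^ 2 - log t ^ 2) / √(r ^ 2 - log t ^ 2)) +
        log t ^ 2 * (sin √(r ^ 2 - log t ^ 2) -
          √(r ^ 2 - log t ^ 2) * cos √(r ^ 2 - log t ^ 2)) / √(r ^ 2 - log t ^ 2) ^ 3) / t) t := by
  have ht₀ := (exp_pos _).trans ht.1
  have hq₀ := sqrt_pos.2 (sq_sub_sq_log_pos ht)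
  have hq := hasDerivAt_sqrt_sq_sub_sq_log ht
  refine (hq.cos.fun_add ((hasDerivAt_log ht₀.ne').fun_mul
    (hq.sin.fun_div hq hq₀.ne'))).congr_deriv ?_
  field_simp
  ring

theorem cos_add_mul_sin_div_nonneg {q : ℝ} (hq : 0 < q) (hqs : q ^ 2 + s ^ 2 ≤ 1) :
    0 ≤ cos q + s * (sin q / q) := by
  have hq_sq := one_sub_sq_div_two_le_cos (x := q)
  have hq_one : q ≤ 1 := by nlinarith [sq_nonneg s]
  rcases le_total 0 s with hs₀ | hs₀
  · have hcos : 0 ≤ cos q := by nlinarith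
    have hsin : 0 ≤ sin q := sin_nonneg_of_nonneg_of_le_pi hq.le (by linarith [pi_gt_three])
    positivity
  · have hsinc : s ≤ s * (sin q / q) :=
      le_mul_of_le_one_right hs₀ ((div_le_one hq).2 (sin_le hq.le))
    nlinarith [sq_nonneg (1 + s)]

theorem monotoneOn_qhBallProfile (hr : 0 < r) (hr₁ : r ≤ 1) :
    MonotoneOn (qhBallProfile r) (Icc (exp (-r)) (exp r)) := by
  refine monotoneOn_of_hasDerivWithinAt_nonneg (convex_Icc _ _)
    ((continuousOn_qhBallProfile r).mono fun t ht ↦ (exp_pos _).trans_le ht.1)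
    (fun t ht ↦ (hasDerivAt_qhBallProfile (interior_Icc.subset ht)).hasDerivWithinAt) fun t ht ↦ ?_
  rw [interior_Icc] at ht
  have hq := sq_sub_sq_log_pos ht
  refine cos_add_mul_sin_div_nonneg (sqrt_pos.2 hq) ?_
  rw [sq_sqrt hq.le]
  nlinarith

theorem convexOn_qhBallProfile (hr : 0 < r) (hr₁ : r ≤ 1) :
    ConvexOn ℝ (Icc (exp (-r)) (exp r)) (qhBallProfile r) := by
  refine convexOn_of_hasDerivWithinAt2_nonneg (convex_Icc _ _)
    ((continuousOn_qhBallProfile r).mono fun t ht ↦ (exp_pos _).trans_le ht.1)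
    (fun t ht ↦ (hasDerivAt_qhBallProfile (interior_Icc.subset ht)).hasDerivWithinAt)
    (fun t ht ↦ (hasDerivAt_deriv_qhBallProfile (interior_Icc.subset ht)).hasDerivWithinAt)
    fun t ht ↦ ?_
  rw [interior_Icc] at ht
  have ht₀ := (exp_pos _).trans ht.1
  have hlog := (lt_log_iff_exp_lt ht₀).2 ht.1
  set q := √(r ^ 2 - log t ^ 2)
  have hq₀ : 0 ≤ q := sqrt_nonneg _
  have hq_pi : q ≤ π := by
    have : q ≤ r := (sqrt_le_left hr.le).2 (sub_le_self _ (sq_nonneg _))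
    linarith [pi_gt_three]
  have h₁ : 0 ≤ 1 + log t := by linarith
  have h₂ : 0 ≤ sin q := sin_nonneg_of_nonneg_of_le_pi hq₀ hq_pi
  have h₃ : 0 ≤ sin q - q * cos q := sub_nonneg.2 (mul_cos_le_sin hq₀ hq_pi)
  positivity

theorem qhBallProfile_lt_of_le (hr : 0 < r) (hr₁ : r ≤ 1) {T c : ℝ}
    (hT : T ∈ Icc (exp (-r)) (exp r)) (hlt : qhBallProfile r T < c) (hct : c ≤ t) (htT : t ≤ T) :
    qhBallProfile r t < c := by
  have hmono := monotoneOn_qhBallProfile hr hr₁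
  have ht : exp (-r) < t := calc
    exp (-r) = qhBallProfile r (exp (-r)) := (qhBallProfile_exp_neg_self r).symm
    _ ≤ qhBallProfile r T := hmono ⟨le_rfl, hT.1.trans hT.2⟩ hT hT.1
    _ < t := hlt.trans_le hct
  exact (hmono ⟨ht.le, htT.trans hT.2⟩ hT htT).trans_lt hlt

end Profile

section Convexity

open Real InnerProductGeometry
open scoped RealInnerProductSpace

variable {V : Type*} [NormedAddCommGroup V] [InnerProductSpace ℝ V] {x y : V} {r : ℝ}

theorem logPolarDist_lt_iff_qhBallProfile_lt (hx : x ≠ 0) (hy : y ≠ 0) (hr : 0 < r) (hrπ : r ≤ π) :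
    logPolarDist x y < r ↔ qhBallProfile r (‖y‖ / ‖x‖) < ⟪x, y⟫ / ‖x‖ ^ 2 := by
  have hinner : ⟪x, y⟫ / ‖x‖ ^ 2 = ‖y‖ / ‖x‖ * cos (angle x y) := by
    rw [← cos_angle_mul_norm_mul_norm]
    field_simp
  have hsqrt : √(r ^ 2 - log (‖y‖ / ‖x‖) ^ 2) ≤ r :=
    (sqrt_le_left hr.le).2 (sub_le_self _ (sq_nonneg _))
  rw [hinner, qhBallProfile, mul_lt_mul_iff_right₀ (by positivity),
    strictAntiOn_cos.lt_iff_gt ⟨sqrt_nonneg _, hsqrt.trans hrπ⟩ ⟨angle_nonneg x y, angle_le_pi x y⟩,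
    lt_sqrt (angle_nonneg x y), lt_sub_iff_add_lt', logPolarDist, sqrt_lt' hr]

theorem mem_qhBall_compl_zero_iff_qhBallProfile_lt [FiniteDimensional ℝ V]
    (hV : 1 < Module.rank ℝ V) (hx : x ≠ 0) (hr : 0 < r) (hrπ : r ≤ π) :
    y ∈ qhBall {0}ᶜ x r ↔ qhBallProfile r (‖y‖ / ‖x‖) < ⟪x, y⟫ / ‖x‖ ^ 2 := by
  rw [mem_qhBall_compl_zero_iff hV hx]
  rcases eq_or_ne y 0 with rfl | hy
  · simp [qhBallProfile]
  · simp [hy, logPolarDist_lt_iff_qhBallProfile_lt hx hy hr hrπ]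

theorem convex_qhBall_compl_zero [FiniteDimensional ℝ V] (hV : 1 < Module.rank ℝ V) (hx : x ≠ 0)
    (hr : 0 < r) (hr₁ : r ≤ 1) : Convex ℝ (qhBall {0}ᶜ x r) := by
  have mem_iff {y : V} := mem_qhBall_compl_zero_iff_qhBallProfile_lt (y := y) hV hx hr
    (by linarith [pi_gt_three])
  have mem_epigraph {y : V} (hy : y ∈ qhBall {0}ᶜ x r) :
      (‖y‖ / ‖x‖, ⟪x, y⟫ / ‖x‖ ^ 2) ∈
        {p : ℝ × ℝ | p.1 ∈ Icc (exp (-r)) (exp r) ∧ qhBallProfile r p.1 < p.2} :=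
    ⟨Ioo_subset_Icc_self (norm_div_norm_mem_Ioo_of_mem_qhBall hV hx hy), mem_iff.1 hy⟩
  intro y hy z hz a b ha hb hab
  obtain ⟨hT, hlt⟩ := (convexOn_qhBallProfile hr hr₁).convex_strict_epigraph
    (mem_epigraph hy) (mem_epigraph hz) ha hb hab
  have hinner : a * (⟪x, y⟫ / ‖x‖ ^ 2) + b * (⟪x, z⟫ / ‖x‖ ^ 2) =
      ⟪x, a • y + b • z⟫ / ‖x‖ ^ 2 := by
    rw [inner_add_right, inner_smul_right, inner_smul_right]
    ring
  have hnorm : ‖a • y + b • z‖ / ‖x‖ ≤ a * (‖y‖ / ‖x‖) + b * (‖z‖ / ‖x‖) := by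
    have := norm_add_le (a • y) (b • z)
    rw [norm_smul_of_nonneg ha, norm_smul_of_nonneg hb] at this
    calc ‖a • y + b • z‖ / ‖x‖ ≤ (a * ‖y‖ + b * ‖z‖) / ‖x‖ := by gcongr
      _ = a * (‖y‖ / ‖x‖) + b * (‖z‖ / ‖x‖) := by ring
  have hcauchy : ⟪x, a • y + b • z⟫ / ‖x‖ ^ 2 ≤ ‖a • y + b • z‖ / ‖x‖ := by
    rw [div_le_iff₀ (by positivity)]
    exact (real_inner_le_norm x _).trans_eq (by field_simp)
  exact mem_iff.2 (qhBallProfile_lt_of_le hr hr₁ hT (hlt.trans_eq hinner) hcauchy hnorm)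

end Convexity

section NonConvexity

open Real
open scoped RealInnerProductSpace

variable {V : Type*} [NormedAddCommGroup V] [InnerProductSpace ℝ V] {x : V} {r : ℝ}

theorem not_convex_qhBall_compl_zero [FiniteDimensional ℝ V] (hV : 1 < Module.rank ℝ V)
    (hx : x ≠ 0) (hr : 1 < r) : ¬ Convex ℝ (qhBall {0}ᶜ x r) := by
  intro hconv
  obtain ⟨f, hxf, hnorm⟩ := exists_inner_eq_zero_norm_eq hV x
  obtain ⟨α, hα₀, hα⟩ : ∃ α, 0 < α ∧ α ≤ min 1 (r - 1) :=
    ⟨_, lt_min one_pos (sub_pos.2 hr), le_rfl⟩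
  obtain ⟨hα₁, hαr⟩ := le_min_iff.1 hα
  -- This choice makes the ends of the chord lie just inside the sphere of radius `r`, while its
  -- midpoint has logarithmic norm `l + log (cos α) ≤ -r`.
  set l := -(r - α ^ 2 / 2) with hl
  have hradius : √(l ^ 2 + α ^ 2) < r := by
    have hα_lt : α ^ 2 / 4 < r - 1 := by nlinarith
    rw [sqrt_lt' (by linarith)]
    linear_combination α ^ 2 * hα_lt
  have hends {β : ℝ} (hβ : β ^ 2 = α ^ 2) :
      exp l • (cos β • x + sin β • f) ∈ qhBall {0}ᶜ x r :=
    (isRectPath_logSpiral hx hxf hnorm l β).mem_qhBall_of_qhLength_lt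
      (by rwa [qhLength_logSpiral hx hxf hnorm, hβ])
  have hmid : (exp l * cos α) • x ∈ qhBall {0}ᶜ x r := by
    convert hconv (hends rfl) (hends (neg_sq α)) (by norm_num) (by norm_num) (add_halves (1 : ℝ))
      using 1
    rw [cos_neg, sin_neg]
    module
  have hcos : 0 < cos α := cos_pos_of_mem_Ioo ⟨by linarith [pi_pos], by linarith [pi_gt_three]⟩
  have hnorm_mid := (norm_div_norm_mem_Ioo_of_mem_qhBall hV hx hmid).1
  rw [norm_smul, mul_div_cancel_right₀ _ (by simpa), norm_of_nonneg (by positivity)] at hnorm_mid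
  refine hnorm_mid.not_ge ?_
  calc exp l * cos α ≤ exp l * exp (-(α ^ 2 / 2)) := by
        gcongr
        exact cos_le_exp_neg_sq_div_two hα₀.le (by linarith [pi_gt_three])
    _ = exp (-r) := by rw [← exp_add, hl]; ring_nf

end NonConvexity

theorem qh_ball_punctured_convexity_general {V : Type*} [NormedAddCommGroup V]
    [InnerProductSpace ℝ V] [FiniteDimensional ℝ V] (hV : 1 < Module.rank ℝ V) {x : V}
    (hx : x ≠ 0) (r : ℝ) :
    (0 < r → r ≤ 1 → StrictlyConvexSet (qhBall {0}ᶜ x r)) ∧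
      (1 < r → ¬ Convex ℝ (qhBall {0}ᶜ x r)) :=
  ⟨fun hr hr₁ ↦ strictlyConvexSet_of_convex_of_isOpen_of_isBounded
    (convex_qhBall_compl_zero hV hx hr hr₁) (isOpen_qhBall_compl_zero hV hx r)
    (isBounded_qhBall_compl_zero hV hx r), not_convex_qhBall_compl_zero hV hx⟩

/-- in the punctured space, quasihyperbolic balls are strictly convex
exactly for radii `r ∈ (0,1]`. -/
theorem qh_ball_punctured_convexity (n : ℕ) (hn : 2 ≤ n)
    (x : EuclideanSpace ℝ (Fin n)) (hx : x ≠ 0) (r : ℝ) :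
    (0 < r → r ≤ 1 →
        StrictlyConvexSet (qhBall ({0}ᶜ : Set (EuclideanSpace ℝ (Fin n))) x r)) ∧
      (1 < r → ¬ Convex ℝ (qhBall ({0}ᶜ : Set (EuclideanSpace ℝ (Fin n))) x r)) :=
  qh_ball_punctured_convexity_general
    (Module.one_lt_rank_of_one_lt_finrank (by rwa [finrank_euclideanSpace_fin])) hx r
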